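/- Let α > 0 and λ > 0 with αλ < 1, and let D_exp(ϑ, θ) := e^ϑ − e^θ − e^θ·(ϑ − θ) be the Bregman divergence of the exponential function on ℝ. For each θ ∈ ℝ, the function ϑ ↦ α|ϑ| + (1/λ)·D_exp(ϑ, θ) attains its infimum at the unique point: log(e^θ − αλ) if θ > log(1 + αλ); log(e^θ + αλ) if θ < log(1 − αλ); and 0 if log(1 − αλ) ≤ θ ≤ log(1 + αλ). -/

import Mathlib

/-- The Bregman divergence of the exponential function on `ℝ`. -/
noncomputable def expDiv (x y : ℝ) : ℝ :=
  Real.exp x - Real.exp y - Real.exp y * (x - y)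

/-- The claimed minimizer of `ϑ ↦ α|ϑ| + (1/λ)·D_exp(ϑ, θ)`. -/
noncomputable def expProxPt (α lam θ : ℝ) : ℝ :=
  if Real.log (1 + α * lam) < θ then Real.log (Real.exp θ - α * lam)
  else if θ < Real.log (1 - α * lam) then Real.log (Real.exp θ + α * lam)
  else 0

/-!
A point `p` minimizes `f + λ⁻¹ D_ψ(·, θ)` as soon as `(ψ'(θ) - ψ'(p)) / λ ∈ ∂f(p)`: by the
three-point identity, this inclusion makes the objective at `x` exceed its value at `p` by at least
`λ⁻¹ D_ψ(x, p)`, which is positive for `x ≠ p` when `ψ` is strictly convex. For `f = α|·|` and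
`ψ = exp` the inclusion reads `e^θ - e^p = αλ` if `p > 0`, `e^θ - e^p = -αλ` if `p < 0`, and
`|e^θ - 1| ≤ αλ` if `p = 0`; solving for `p` gives the three cases.
-/

/-- The Bregman divergence `D_ψ(x, y)` of `ψ : ℝ → ℝ`. It carries its meaning only where `ψ` is
differentiable at `y`, since `deriv ψ y` is `0` elsewhere. -/
noncomputable def bregmanDiv (ψ : ℝ → ℝ) (x y : ℝ) : ℝ :=
  ψ x - ψ y - deriv ψ y * (x - y)

/-- `g` is a subgradient of `f : ℝ → ℝ` at `p`, i.e. `g ∈ ∂f(p)`: the form in which first-order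
optimality is expressed when `f` is not differentiable. -/
def IsSubgradientAt (f : ℝ → ℝ) (g p : ℝ) : Prop :=
  ∀ x, f p + g * (x - p) ≤ f x

theorem bregmanDiv_pos {ψ : ℝ → ℝ} {S : Set ℝ} {x y : ℝ} (hψ : StrictConvexOn ℝ S ψ)
    (hx : x ∈ S) (hy : y ∈ S) (hxy : x ≠ y) (hdiff : DifferentiableAt ℝ ψ y) :
    0 < bregmanDiv ψ x y := by
  unfold bregmanDiv
  rcases hxy.lt_or_gt with hlt | hgt
  · have hslope := hψ.slope_lt_deriv hx hy hlt hdiff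
    rw [slope_def_field, div_lt_iff₀ (sub_pos.mpr hlt)] at hslope
    linarith
  · have hslope := hψ.deriv_lt_slope hy hx hgt hdiff
    rw [slope_def_field, lt_div_iff₀ (sub_pos.mpr hgt)] at hslope
    linarith

theorem bregmanDiv_three_point (ψ : ℝ → ℝ) (x p y : ℝ) :
    bregmanDiv ψ x y =
      bregmanDiv ψ x p + bregmanDiv ψ p y - (deriv ψ y - deriv ψ p) * (x - p) := by
  unfold bregmanDiv
  ring

theorem expDiv_eq_bregmanDiv (x y : ℝ) : expDiv x y = bregmanDiv Real.exp x y := by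
  rw [expDiv, bregmanDiv, Real.deriv_exp]

theorem add_bregmanDiv_lt_of_isSubgradientAt {f ψ : ℝ → ℝ} {S : Set ℝ} {lam x p y : ℝ}
    (hψ : StrictConvexOn ℝ S ψ) (hx : x ∈ S) (hp : p ∈ S) (hxp : x ≠ p)
    (hdiff : DifferentiableAt ℝ ψ p) (hlam : 0 < lam)
    (hsub : IsSubgradientAt f ((deriv ψ y - deriv ψ p) / lam) p) :
    f p + 1 / lam * bregmanDiv ψ p y < f x + 1 / lam * bregmanDiv ψ x y := by
  have hgap : 0 < 1 / lam * bregmanDiv ψ x p :=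
    mul_pos (one_div_pos.mpr hlam) (bregmanDiv_pos hψ hx hp hxp hdiff)
  calc
    f p + 1 / lam * bregmanDiv ψ p y
      < f p + 1 / lam * bregmanDiv ψ p y + 1 / lam * bregmanDiv ψ x p :=
        lt_add_of_pos_right _ hgap
    _ = f p + (deriv ψ y - deriv ψ p) / lam * (x - p) + 1 / lam * bregmanDiv ψ x y := by
        rw [bregmanDiv_three_point ψ x p y]
        ring
    _ ≤ f x + 1 / lam * bregmanDiv ψ x y := by
        gcongr
        exact hsub x

theorem isSubgradientAt_mul_abs {α g p : ℝ} (hg : |g| ≤ α) (hgp : g * p = α * |p|) :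
    IsSubgradientAt (fun x => α * |x|) g p := fun x =>
  calc
    α * |p| + g * (x - p) = g * x := by rw [← hgp]; ring
    _ ≤ |g| * |x| := (le_abs_self _).trans_eq (abs_mul g x)
    _ ≤ α * |x| := by gcongr

section OptimalityCondition

variable {α lam u : ℝ}

theorem isSubgradientAt_mul_abs_log_sub (hα : 0 ≤ α) (hlam : 0 < lam) (hu : 1 + α * lam < u) :
    IsSubgradientAt (fun x => α * |x|) ((u - Real.exp (Real.log (u - α * lam))) / lam)
      (Real.log (u - α * lam)) := by
  have hslope : (u - Real.exp (Real.log (u - α * lam))) / lam = α := by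
    rw [Real.exp_log (by linarith), sub_sub_cancel, mul_div_cancel_right₀ α hlam.ne']
  have hlog : 0 < Real.log (u - α * lam) := Real.log_pos (by linarith)
  rw [hslope]
  exact isSubgradientAt_mul_abs (abs_of_nonneg hα).le (by rw [abs_of_pos hlog])

theorem isSubgradientAt_mul_abs_log_add (hα : 0 ≤ α) (hlam : 0 < lam) (hu : 0 < u)
    (hu' : u < 1 - α * lam) :
    IsSubgradientAt (fun x => α * |x|) ((u - Real.exp (Real.log (u + α * lam))) / lam)
      (Real.log (u + α * lam)) := by
  have hpos : 0 < u + α * lam := add_pos_of_pos_of_nonneg hu (mul_nonneg hα hlam.le)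
  have hslope : (u - Real.exp (Real.log (u + α * lam))) / lam = -α := by
    rw [Real.exp_log hpos, sub_add_cancel_left, neg_div, mul_div_cancel_right₀ α hlam.ne']
  have hlog : Real.log (u + α * lam) < 0 := Real.log_neg hpos (by linarith)
  rw [hslope]
  exact isSubgradientAt_mul_abs (by rw [abs_neg, abs_of_nonneg hα])
    (by rw [abs_of_neg hlog, neg_mul_comm])

theorem isSubgradientAt_mul_abs_zero (hlam : 0 < lam) (hu : |u - 1| ≤ α * lam) :
    IsSubgradientAt (fun x => α * |x|) ((u - Real.exp 0) / lam) 0 := by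
  refine isSubgradientAt_mul_abs ?_ (by rw [abs_zero, mul_zero, mul_zero])
  rwa [Real.exp_zero, abs_div, abs_of_pos hlam, div_le_iff₀ hlam]

theorem isSubgradientAt_mul_abs_expProxPt (hα : 0 ≤ α) (hlam : 0 < lam) (h1 : α * lam < 1) (θ : ℝ) :
    IsSubgradientAt (fun x => α * |x|) ((Real.exp θ - Real.exp (expProxPt α lam θ)) / lam)
      (expProxPt α lam θ) := by
  have hadd : 0 < 1 + α * lam := add_pos_of_pos_of_nonneg one_pos (mul_nonneg hα hlam.le)
  have hsub : 0 < 1 - α * lam := sub_pos.mpr h1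
  unfold expProxPt
  split_ifs with hgt hlt
  · exact isSubgradientAt_mul_abs_log_sub hα hlam ((Real.log_lt_iff_lt_exp hadd).mp hgt)
  · exact isSubgradientAt_mul_abs_log_add hα hlam (Real.exp_pos θ)
      ((Real.lt_log_iff_exp_lt hsub).mp hlt)
  · have hle : Real.exp θ ≤ 1 + α * lam := (Real.le_log_iff_exp_le hadd).mp (not_lt.mp hgt)
    have hge : 1 - α * lam ≤ Real.exp θ := (Real.log_le_iff_le_exp hsub).mp (not_lt.mp hlt)
    exact isSubgradientAt_mul_abs_zero hlam (abs_le.mpr ⟨by linarith, by linarith⟩)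

end OptimalityCondition

theorem objective_expProxPt_lt {α lam θ ϑ : ℝ} (hα : 0 ≤ α) (hlam : 0 < lam)
    (h1 : α * lam < 1) (hϑ : ϑ ≠ expProxPt α lam θ) :
    α * |expProxPt α lam θ| + (1 / lam) * expDiv (expProxPt α lam θ) θ <
      α * |ϑ| + (1 / lam) * expDiv ϑ θ := by
  have hopt : IsSubgradientAt (fun x => α * |x|)
      ((deriv Real.exp θ - deriv Real.exp (expProxPt α lam θ)) / lam) (expProxPt α lam θ) := by
    rw [Real.deriv_exp]
    exact isSubgradientAt_mul_abs_expProxPt hα hlam h1 θ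
  simp only [expDiv_eq_bregmanDiv]
  exact add_bregmanDiv_lt_of_isSubgradientAt strictConvexOn_exp (Set.mem_univ _) (Set.mem_univ _) hϑ
    Real.differentiableAt_exp hlam hopt

/-- The left Bregman proximity operator of `α|·|` associated with `exp`: for `αλ < 1`,
the function `ϑ ↦ α|ϑ| + (1/λ)·D_exp(ϑ, θ)` attains its infimum at the unique point
given by the explicit formula `expProxPt`. -/
theorem stmt12 (α lam : ℝ) (hα : 0 < α) (hlam : 0 < lam) (h1 : α * lam < 1) :
    ∀ θ : ℝ,
      (∀ ϑ : ℝ,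
        α * |expProxPt α lam θ| + (1 / lam) * expDiv (expProxPt α lam θ) θ ≤
          α * |ϑ| + (1 / lam) * expDiv ϑ θ) ∧
      (∀ ϑ : ℝ,
        (∀ ϑ' : ℝ, α * |ϑ| + (1 / lam) * expDiv ϑ θ ≤
          α * |ϑ'| + (1 / lam) * expDiv ϑ' θ) →
        ϑ = expProxPt α lam θ) := by
  intro θ
  have hlt {ϑ : ℝ} (hϑ : ϑ ≠ expProxPt α lam θ) := objective_expProxPt_lt hα.le hlam h1 hϑ
  refine ⟨fun ϑ => ?_, fun ϑ hmin => ?_⟩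
  · rcases eq_or_ne ϑ (expProxPt α lam θ) with rfl | hϑ
    · exact le_rfl
    · exact (hlt hϑ).le
  · by_contra hϑ
    exact (hlt hϑ).not_ge (hmin (expProxPt α lam θ))
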